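/- arXiv:1704.00615 — 2 statements merged into one kernel-verified Lean document; each statement's English description precedes it below -/
import Mathlib

section
/- Let V be a finite dimensional real normed vector space, let O₁ and O₂ be open bounded subsets of V with closure(O₁) ⊆ O₂, and let K ⊆ V be a bounded set. Then there exists a real constant Q₀ = Q₀(O₁,O₂,K) ≥ 0 such that for every real Q ≥ Q₀, Q·O₁ + K ⊆ Q·O₂, where Q·O = {Q·x : x ∈ O} and A + B = {a + b : a ∈ A, b ∈ B}. -/
open Set Bornology
open scoped Pointwise

open Filter
open scoped Topology

theorem smul_add_subset_smul {M V : Type*} [AddZeroClass V] [DistribSMul M V]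
    {A B K W : Set V} {c : M} (hAW : A + W ⊆ B) (hK : K ⊆ c • W) : c • A + K ⊆ c • B :=
  calc
    c • A + K ⊆ c • A + c • W := add_subset_add_left hK
    _ = c • (A + W) := (smul_add c A W).symm
    _ ⊆ c • B := smul_set_mono hAW

theorem eventually_cobounded_smul_add_subset_smul {𝕜 V : Type*} [SeminormedRing 𝕜]
    [AddZeroClass V] [DistribSMul 𝕜 V] [TopologicalSpace V] {A B K W : Set V}
    (hK : IsVonNBounded 𝕜 K) (hW : W ∈ 𝓝 0) (hAW : A + W ⊆ B) :
    ∀ᶠ c in cobounded 𝕜, c • A + K ⊆ c • B :=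
  (hK hW).eventually.mono fun _ => smul_add_subset_smul hAW

theorem stmt10_general {𝕜 V : Type*} [SeminormedRing 𝕜] [AddZeroClass V] [DistribSMul 𝕜 V]
    [TopologicalSpace V] [ContinuousAdd V] {O₁ O₂ K : Set V} (h₁c : IsCompact (closure O₁))
    (h₂o : IsOpen O₂) (hss : closure O₁ ⊆ O₂) (hK : IsVonNBounded 𝕜 K) :
    ∀ᶠ Q in cobounded 𝕜, Q • O₁ + K ⊆ Q • O₂ := by
  obtain ⟨W, hW, hadd⟩ := compact_open_separated_add_right h₁c h₂o hss
  exact eventually_cobounded_smul_add_subset_smul hK hW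
    ((add_subset_add_right subset_closure).trans hadd)

/-- Dilation absorption for super-strictly nested bounded open sets. -/
theorem stmt10 (V : Type*) [NormedAddCommGroup V] [NormedSpace ℝ V] [FiniteDimensional ℝ V]
    (O₁ O₂ K : Set V) (h₁o : IsOpen O₁) (h₂o : IsOpen O₂)
    (hb₁ : IsBounded O₁) (hb₂ : IsBounded O₂)
    (hss : closure O₁ ⊆ O₂) (hK : IsBounded K) :
    ∃ Q₀ : ℝ, 0 ≤ Q₀ ∧ ∀ Q : ℝ, Q₀ ≤ Q → Q • O₁ + K ⊆ Q • O₂ := by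
  have : ProperSpace V := FiniteDimensional.proper ℝ V
  exact (atTop_basis' 0).eventually_iff.1 <| IsOrderBornology.atTop_le_cobounded <|
    stmt10_general hb₁.isCompact_closure h₂o hss (NormedSpace.isVonNBounded_of_isBounded ℝ hK)
end

section
/- Let d ≥ 2 and g ∈ GL(d,ℝ). For the action of GL(d,ℝ) on the real projective space ℙ(ℝ^d) equipped with the Fubini–Study metric, g is Lipschitz with constant N₂(g)·‖g⁻¹‖², i.e. for all nonzero v, w ∈ ℝ^d, d([gv],[gw]) ≤ N₂(g)·‖g⁻¹‖²·d([v],[w]), where N₂(g) := sup { ‖gv ∧ gw‖ / ‖v ∧ w‖ : v, w ∈ ℝ^d linearly independent } is the operator norm of the second exterior power of g. -/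
open Set Filter Topology
open scoped RealInnerProductSpace

noncomputable section

abbrev GLd (d : ℕ) := Matrix.GeneralLinearGroup (Fin d) ℝ

abbrev Ed (d : ℕ) := EuclideanSpace ℝ (Fin d)

variable {d : ℕ}

/-- Operator norm of a real `d × d` matrix w.r.t. the Euclidean norm on `ℝ^d`. -/
noncomputable def opNorm (g : Matrix (Fin d) (Fin d) ℝ) : ℝ :=
  ‖LinearMap.toContinuousLinearMap (Matrix.toEuclideanLin g)‖

/-- The action of a matrix on `ℝ^d` (with its Euclidean structure). -/
noncomputable def matAct (g : Matrix (Fin d) (Fin d) ℝ) (v : Ed d) : Ed d :=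
  Matrix.toEuclideanLin g v

/-- `‖v ∧ w‖ = sqrt(‖v‖²‖w‖² − ⟨v,w⟩²)`. -/
noncomputable def wedgeNorm (v w : Ed d) : ℝ :=
  Real.sqrt (‖v‖ ^ 2 * ‖w‖ ^ 2 - ⟪v, w⟫ ^ 2)

/-- The Fubini–Study distance between the lines spanned by two nonzero vectors. -/
noncomputable def projDist (v w : Ed d) : ℝ :=
  wedgeNorm v w / (‖v‖ * ‖w‖)

/-- The operator norm of the second exterior power of `g`. -/
noncomputable def secondExtNorm (g : Matrix (Fin d) (Fin d) ℝ) : ℝ :=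
  sSup ((fun p : Ed d × Ed d => wedgeNorm (matAct g p.1) (matAct g p.2) / wedgeNorm p.1 p.2) ''
    {p : Ed d × Ed d | LinearIndependent ℝ ![p.1, p.2]})

/-!
Replacing `w` by `w - t • v` leaves `‖v ∧ w‖` unchanged, so one may take `w` orthogonal to `v`,
where `‖v ∧ w‖ = ‖v‖ * ‖w‖`. Hence `‖fv ∧ fw‖ ≤ ‖f‖² * ‖v ∧ w‖`, which makes the supremum defining
`‖Λ²f‖` finite and gives `‖fv ∧ fw‖ ≤ ‖Λ²f‖ * ‖v ∧ w‖`. Normalising by `‖fv‖ * ‖fw‖` instead of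
`‖v‖ * ‖w‖` costs at most a factor `‖f⁻¹‖²`, since `‖v‖ ≤ ‖f⁻¹‖ * ‖fv‖`.
-/

section InnerProductSpace

open scoped InnerProductSpace

variable {𝕜 E F : Type*} [RCLike 𝕜]
  [NormedAddCommGroup E] [InnerProductSpace 𝕜 E] [NormedAddCommGroup F] [InnerProductSpace 𝕜 F]

variable (𝕜) in
/-- The norm of the bivector `v ∧ w`, that is, the square root of the Gram determinant of `v`, `w`.
For `𝕜 = ℝ` it is `wedgeNorm`. -/
def normWedge (v w : E) : ℝ :=
  √(‖v‖ ^ 2 * ‖w‖ ^ 2 - ‖⟪v, w⟫_𝕜‖ ^ 2)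

variable (𝕜) in
/-- The Fubini–Study distance between the lines `𝕜 ∙ v` and `𝕜 ∙ w`, computed on spanning vectors;
the value is `0` when `v` or `w` vanishes. -/
def fubiniStudyDist (v w : E) : ℝ :=
  normWedge 𝕜 v w / (‖v‖ * ‖w‖)

/-- The operator norm of the second exterior power of `f`, as a supremum over pairs of linearly
independent vectors; it is `0` when there are no such pairs. -/
def normExtSquare (f : E →L[𝕜] F) : ℝ :=
  sSup ((fun p : E × E ↦ normWedge 𝕜 (f p.1) (f p.2) / normWedge 𝕜 p.1 p.2) ''
    {p : E × E | LinearIndependent 𝕜 ![p.1, p.2]})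

theorem normWedge_nonneg (v w : E) : 0 ≤ normWedge 𝕜 v w :=
  Real.sqrt_nonneg _

theorem normWedge_le_norm_mul_norm (v w : E) : normWedge 𝕜 v w ≤ ‖v‖ * ‖w‖ := by
  refine Real.sqrt_le_iff.2 ⟨by positivity, ?_⟩
  rw [mul_pow]
  exact sub_le_self _ (sq_nonneg _)

theorem normWedge_of_inner_eq_zero {v w : E} (h : ⟪v, w⟫_𝕜 = 0) :
    normWedge 𝕜 v w = ‖v‖ * ‖w‖ := by
  rw [normWedge, h, norm_zero, zero_pow two_ne_zero, sub_zero, ← mul_pow,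
    Real.sqrt_sq (by positivity)]

theorem normWedge_sub_smul_right (v w : E) (t : 𝕜) :
    normWedge 𝕜 v (w - t • v) = normWedge 𝕜 v w := by
  have norm_sq : ‖w - t • v‖ ^ 2 =
      ‖w‖ ^ 2 - 2 * RCLike.re (t * ⟪w, v⟫_𝕜) + ‖t‖ ^ 2 * ‖v‖ ^ 2 := by
    rw [norm_sub_sq (𝕜 := 𝕜), inner_smul_right, norm_smul, mul_pow]
  have norm_inner_sq : ‖⟪v, w - t • v⟫_𝕜‖ ^ 2 =
      ‖⟪v, w⟫_𝕜‖ ^ 2 - 2 * (‖v‖ ^ 2 * RCLike.re (t * ⟪w, v⟫_𝕜)) + ‖t‖ ^ 2 * (‖v‖ ^ 2) ^ 2 := by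
    have inner_eq : ⟪v, w - t • v⟫_𝕜 = ⟪v, w⟫_𝕜 - ((‖v‖ ^ 2 : ℝ) : 𝕜) * t := by
      rw [inner_sub_right, inner_smul_right, inner_self_eq_norm_sq_to_K, RCLike.ofReal_pow,
        mul_comm t]
    rw [inner_eq, norm_sub_sq (𝕜 := 𝕜), RCLike.inner_apply, inner_conj_symm, mul_assoc,
      RCLike.re_ofReal_mul, norm_mul, RCLike.norm_ofReal, abs_sq, mul_pow, mul_comm (‖t‖ ^ 2)]
  rw [normWedge, normWedge, norm_sq, norm_inner_sq]
  congr 1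
  ring

variable (𝕜) in
theorem exists_inner_sub_smul_eq_zero (v w : E) : ∃ t : 𝕜, ⟪v, w - t • v⟫_𝕜 = 0 := by
  obtain rfl | hv := eq_or_ne v 0
  · exact ⟨0, inner_zero_left _⟩
  · refine ⟨⟪v, w⟫_𝕜 / ⟪v, v⟫_𝕜, ?_⟩
    rw [inner_sub_right, inner_smul_right, div_mul_cancel₀ _ (inner_self_ne_zero.2 hv), sub_self]

theorem linearIndependent_of_normWedge_ne_zero {v w : E} (h : normWedge 𝕜 v w ≠ 0) :
    LinearIndependent 𝕜 ![v, w] := by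
  have hv : v ≠ 0 := by
    rintro rfl
    simp [normWedge] at h
  refine (LinearIndependent.pair_iff' hv).2 fun a ha ↦ h ?_
  rw [← normWedge_sub_smul_right v w a, ha, sub_self,
    normWedge_of_inner_eq_zero (inner_zero_right v), norm_zero, mul_zero]

theorem normWedge_map_le_opNorm_sq_mul (f : E →L[𝕜] F) (v w : E) :
    normWedge 𝕜 (f v) (f w) ≤ ‖f‖ ^ 2 * normWedge 𝕜 v w := by
  obtain ⟨t, ht⟩ := exists_inner_sub_smul_eq_zero 𝕜 v w
  calc normWedge 𝕜 (f v) (f w)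
      = normWedge 𝕜 (f v) (f (w - t • v)) := by
        rw [map_sub, map_smul, normWedge_sub_smul_right]
    _ ≤ ‖f v‖ * ‖f (w - t • v)‖ := normWedge_le_norm_mul_norm _ _
    _ ≤ (‖f‖ * ‖v‖) * (‖f‖ * ‖w - t • v‖) := by gcongr <;> exact f.le_opNorm _
    _ = ‖f‖ ^ 2 * (‖v‖ * ‖w - t • v‖) := by ring
    _ = ‖f‖ ^ 2 * normWedge 𝕜 v w := by
        rw [← normWedge_of_inner_eq_zero ht, normWedge_sub_smul_right]

theorem bddAbove_normWedge_map_div (f : E →L[𝕜] F) (s : Set (E × E)) :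
    BddAbove ((fun p : E × E ↦ normWedge 𝕜 (f p.1) (f p.2) / normWedge 𝕜 p.1 p.2) '' s) := by
  refine ⟨‖f‖ ^ 2, ?_⟩
  rintro _ ⟨p, -, rfl⟩
  exact div_le_of_le_mul₀ (normWedge_nonneg _ _) (by positivity)
    (normWedge_map_le_opNorm_sq_mul f _ _)

theorem normExtSquare_nonneg (f : E →L[𝕜] F) : 0 ≤ normExtSquare f := by
  refine Real.sSup_nonneg ?_
  rintro _ ⟨p, -, rfl⟩
  exact div_nonneg (normWedge_nonneg _ _) (normWedge_nonneg _ _)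

theorem normWedge_map_le_normExtSquare_mul (f : E →L[𝕜] F) (v w : E) :
    normWedge 𝕜 (f v) (f w) ≤ normExtSquare f * normWedge 𝕜 v w := by
  obtain h | h := eq_or_ne (normWedge 𝕜 v w) 0
  · simpa only [h, mul_zero] using normWedge_map_le_opNorm_sq_mul f v w
  · rw [← div_le_iff₀ ((normWedge_nonneg v w).lt_of_ne' h)]
    exact le_csSup (bddAbove_normWedge_map_div f _)
      ⟨(v, w), linearIndependent_of_normWedge_ne_zero h, rfl⟩

open scoped NNReal in
theorem fubiniStudyDist_map_le_of_antilipschitzWith {f : E →L[𝕜] F} {K : ℝ≥0}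
    (hf : AntilipschitzWith K f) {v w : E} (hv : v ≠ 0) (hw : w ≠ 0) :
    fubiniStudyDist 𝕜 (f v) (f w) ≤ normExtSquare f * K ^ 2 * fubiniStudyDist 𝕜 v w := by
  have norm_le (u : E) : ‖u‖ ≤ K * ‖f u‖ := hf.le_mul_norm (map_zero f) u
  have map_pos {u : E} (hu : u ≠ 0) : 0 < ‖f u‖ :=
    norm_pos_iff.2 ((map_ne_zero_iff f hf.injective).2 hu)
  rw [fubiniStudyDist, fubiniStudyDist, ← mul_div_assoc,
    div_le_div_iff₀ (mul_pos (map_pos hv) (map_pos hw)) (by positivity)]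
  calc normWedge 𝕜 (f v) (f w) * (‖v‖ * ‖w‖)
      ≤ (normExtSquare f * normWedge 𝕜 v w) * ((K * ‖f v‖) * (K * ‖f w‖)) := by
        have := normExtSquare_nonneg f
        have := normWedge_nonneg (𝕜 := 𝕜) v w
        gcongr
        exacts [normWedge_map_le_normExtSquare_mul f v w, norm_le v, norm_le w]
    _ = normExtSquare f * K ^ 2 * normWedge 𝕜 v w * (‖f v‖ * ‖f w‖) := by ring

theorem stmt12_general (e : E ≃L[𝕜] F) {v w : E} (hv : v ≠ 0) (hw : w ≠ 0) :
    fubiniStudyDist 𝕜 (e v) (e w) ≤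
      normExtSquare (e : E →L[𝕜] F) * ‖(e.symm : F →L[𝕜] E)‖ ^ 2 * fubiniStudyDist 𝕜 v w :=
  fubiniStudyDist_map_le_of_antilipschitzWith (f := (e : E →L[𝕜] F)) e.antilipschitz hv hw

end InnerProductSpace

theorem wedgeNorm_eq_normWedge (v w : Ed d) : wedgeNorm v w = normWedge ℝ v w := by
  rw [wedgeNorm, normWedge, Real.norm_eq_abs, sq_abs]

theorem projDist_eq_fubiniStudyDist (v w : Ed d) : projDist v w = fubiniStudyDist ℝ v w := by
  rw [projDist, fubiniStudyDist, wedgeNorm_eq_normWedge]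

theorem matAct_eq_toEuclideanCLM (g : Matrix (Fin d) (Fin d) ℝ) (v : Ed d) :
    matAct g v = Matrix.toEuclideanCLM (𝕜 := ℝ) g v :=
  rfl

theorem secondExtNorm_eq_normExtSquare (g : Matrix (Fin d) (Fin d) ℝ) :
    secondExtNorm g = normExtSquare (Matrix.toEuclideanCLM (𝕜 := ℝ) g) := by
  simp only [secondExtNorm, normExtSquare, wedgeNorm_eq_normWedge, matAct_eq_toEuclideanCLM]

theorem opNorm_eq_norm_toEuclideanCLM (g : Matrix (Fin d) (Fin d) ℝ) :
    opNorm g = ‖Matrix.toEuclideanCLM (𝕜 := ℝ) g‖ :=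
  rfl

/-- The automorphism of `ℝ^d` (with its Euclidean structure) given by an invertible matrix. -/
def euclideanEquiv (g : GLd d) : Ed d ≃L[ℝ] Ed d :=
  ContinuousLinearEquiv.ofUnit
    (Units.map (Matrix.toEuclideanCLM (n := Fin d) (𝕜 := ℝ) : _ →* _) g)

theorem coe_euclideanEquiv (g : GLd d) :
    (euclideanEquiv g : Ed d →L[ℝ] Ed d) =
      Matrix.toEuclideanCLM (𝕜 := ℝ) (g : Matrix (Fin d) (Fin d) ℝ) :=
  rfl

theorem coe_euclideanEquiv_symm (g : GLd d) :
    ((euclideanEquiv g).symm : Ed d →L[ℝ] Ed d) =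
      Matrix.toEuclideanCLM (𝕜 := ℝ) ((g⁻¹ : GLd d) : Matrix (Fin d) (Fin d) ℝ) :=
  rfl

/-- `g` acts on projective space with Lipschitz constant
`‖Λ²g‖·‖g⁻¹‖²`. -/
theorem stmt12 (d : ℕ) (hd : 2 ≤ d) (g : GLd d) :
    ∀ v w : Ed d, v ≠ 0 → w ≠ 0 →
      projDist (matAct (g : Matrix (Fin d) (Fin d) ℝ) v)
          (matAct (g : Matrix (Fin d) (Fin d) ℝ) w) ≤
        secondExtNorm (g : Matrix (Fin d) (Fin d) ℝ) *
          opNorm ((g⁻¹ : GLd d) : Matrix (Fin d) (Fin d) ℝ) ^ 2 * projDist v w := by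
  intro v w hv hw
  rw [projDist_eq_fubiniStudyDist, projDist_eq_fubiniStudyDist, secondExtNorm_eq_normExtSquare,
    opNorm_eq_norm_toEuclideanCLM, matAct_eq_toEuclideanCLM, matAct_eq_toEuclideanCLM,
    ← coe_euclideanEquiv, ← coe_euclideanEquiv_symm]
  exact stmt12_general (euclideanEquiv g) hv hw
end
end
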